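/- arXiv:1008.2368 — 2 statements merged into one kernel-verified Lean document; each statement's English description precedes it below -/
import Mathlib

section
/- Let q be a prime power with q ≥ 4 and let P be a closed point of degree 3 of P² over F_q not contained in any F_q-rational line, given by a point p ∈ P²(F_{q³}) whose Frobenius orbit {p, φ(p), φ²(p)} has exactly 3 elements, these three points being non-collinear. Let V be the F_q-vector space of homogeneous polynomials of degree 4 in F_q[x,y,z] vanishing at p. Then the evaluation code C_L(Z, L_4), obtained by evaluating the elements of V at the q² + q + 1 points of P²(F_q), has parameters [q² + q + 1, 12, q² − 2q − 1]: its length is q² + q + 1, its dimension is 12 (in particular dim V = 12 and the evaluation map is injective), and its minimum distance is exactly q² − 2q − 1. -/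
open MvPolynomial

noncomputable section

section general
variable {F : Type} [Field F]

/-- Scaling for homogeneous polynomials in an arbitrary algebra. -/
lemma aeval_smul_hom {A : Type} [CommRing A] [Algebra F A] {f : MvPolynomial (Fin 3) F} {d : ℕ}
    (hf : f.IsHomogeneous d) (c : A) (x : Fin 3 → A) :
    MvPolynomial.aeval (fun i => c * x i) f = c ^ d * MvPolynomial.aeval x f := by
  simp only [MvPolynomial.aeval_def, MvPolynomial.eval₂_eq', Finset.mul_sum]
  refine Finset.sum_congr rfl fun m hm => ?_
  have h : m.degree = d := by
    rw [MvPolynomial.mem_support_iff] at hm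
    by_contra h
    exact hm (hf.coeff_eq_zero h)
  simp only [mul_pow, Finset.prod_mul_distrib, Finset.prod_pow_eq_pow_sum]
  rw [← h, Finsupp.degree_eq_sum]
  ring

lemma eval_smul_hom {f : MvPolynomial (Fin 3) F} {d : ℕ}
    (hf : f.IsHomogeneous d) (c : F) (x : Fin 3 → F) :
    MvPolynomial.eval (c • x) f = c ^ d * MvPolynomial.eval x f := by
  have := aeval_smul_hom hf c x
  simpa [MvPolynomial.aeval_eq_eval, Pi.smul_def] using this

/-- The restriction of `f` to the line `T Q + R`. -/
def linePoly (f : MvPolynomial (Fin 3) F) (Q R : Fin 3 → F) : Polynomial F :=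
  MvPolynomial.aeval (fun i => Polynomial.C (Q i) * Polynomial.X + Polynomial.C (R i)) f

lemma eval_lp (f : MvPolynomial (Fin 3) F) (Q R : Fin 3 → F) (t : F) :
    (linePoly f Q R).eval t = MvPolynomial.eval (t • Q + R) f := by
  induction f using MvPolynomial.induction_on with
  | C a => simp [linePoly]
  | add p q hp hq => simp only [linePoly, map_add, Polynomial.eval_add] at *; rw [hp, hq]
  | mul_X p i hp =>
    simp only [linePoly, map_mul, Polynomial.eval_mul] at *
    rw [hp]; congr 1; simp; ring

/-- The differential of `f` at `Q`. -/
def gr (f : MvPolynomial (Fin 3) F) (Q : Fin 3 → F) : (Fin 3 → F) →ₗ[F] F :=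
  ∑ i, MvPolynomial.eval Q (pderiv i f) • LinearMap.proj i

lemma gr_apply (f : MvPolynomial (Fin 3) F) (Q R : Fin 3 → F) :
    gr f Q R = ∑ i, MvPolynomial.eval Q (pderiv i f) * R i := by
  simp [gr]

lemma eval_deriv_lp (f : MvPolynomial (Fin 3) F) (Q R : Fin 3 → F) (t : F) :
    (Polynomial.derivative (linePoly f Q R)).eval t = gr f (t • Q + R) Q := by
  rw [gr_apply]
  induction f using MvPolynomial.induction_on with
  | C a => simp [linePoly]
  | add p q hp hq =>
    have : linePoly (p + q) Q R = linePoly p Q R + linePoly q Q R := by simp [linePoly]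
    rw [this]
    simp only [map_add, Polynomial.eval_add, hp, hq, add_mul, Finset.sum_add_distrib]
  | mul_X p i hp =>
    have : linePoly (p * X i) Q R = linePoly p Q R *
      (Polynomial.C (Q i) * Polynomial.X + Polynomial.C (R i)) := by simp [linePoly]
    rw [this]
    simp only [Polynomial.derivative_mul, Polynomial.eval_add, Polynomial.eval_mul, hp, eval_lp,
      Derivation.leibniz, pderiv_X, map_add, smul_eq_mul, map_mul, add_mul, Finset.sum_add_distrib]
    have h : ∀ x, (MvPolynomial.eval (t • Q + R)) p * (MvPolynomial.eval (t • Q + R))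
      (Pi.single (M := fun _ => MvPolynomial (Fin 3) F) x 1 i) * Q x = if x = i then
        (MvPolynomial.eval (t • Q + R)) p * Q i else 0 := by
      intro x
      by_cases hx : x = i
      · subst hx; simp
      · simp [hx, Ne.symm hx]
    simp only [h, Finset.sum_ite_eq', Finset.mem_univ, if_true]
    simp only [Polynomial.eval_C, Polynomial.eval_X, Polynomial.derivative_C,
      Polynomial.derivative_X, Polynomial.eval_zero, Polynomial.eval_one, eval_X, Finset.sum_mul,
      Pi.add_apply, Pi.smul_apply, smul_eq_mul]
    rw [add_comm]
    congr 1
    · ring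
    · refine Finset.sum_congr rfl fun j _ => by ring

lemma natDegree_lp {f : MvPolynomial (Fin 3) F} {d : ℕ} (hf : f.IsHomogeneous d)
    (Q R : Fin 3 → F) : (linePoly f Q R).natDegree ≤ d := by
  have := MvPolynomial.aeval_natDegree_le f hf.totalDegree_le
    (fun i => Polynomial.C (Q i) * Polynomial.X + Polynomial.C (R i)) (n := 1)
    (fun i => Polynomial.natDegree_linear_le)
  simpa [linePoly] using this

lemma reflect_lin (a b : F) : Polynomial.reflect 1 (Polynomial.C a * Polynomial.X + Polynomial.C b)
    = Polynomial.C b * Polynomial.X + Polynomial.C a := by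
  rw [Polynomial.reflect_add, Polynomial.reflect_C_mul, Polynomial.reflect_one_X,
    Polynomial.reflect_C]
  simp [add_comm]

lemma reflect_lp_one {m : MvPolynomial (Fin 3) F} (hm : m ∈ homogeneousSubmodule (Fin 3) F 1)
    (Q R : Fin 3 → F) : Polynomial.reflect 1 (linePoly m Q R) = linePoly m R Q := by
  rw [homogeneousSubmodule_one_eq_span_X] at hm
  induction hm using Submodule.span_induction with
  | mem x h =>
    obtain ⟨i, rfl⟩ := h
    simp only [linePoly, aeval_X]
    rw [reflect_lin]
  | zero => simp [linePoly]
  | add x y _ _ hx hy =>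
    have e : ∀ Q R, linePoly (x + y) Q R = linePoly x Q R + linePoly y Q R := by
      intros; simp [linePoly]
    rw [e, e, Polynomial.reflect_add, hx, hy]
  | smul a x _ hx =>
    have e : ∀ Q R, linePoly (a • x) Q R = Polynomial.C a * linePoly x Q R := by
      intros; simp [linePoly, Polynomial.smul_eq_C_mul]
    rw [e, e, Polynomial.reflect_C_mul, hx]

lemma reflect_lp {f : MvPolynomial (Fin 3) F} {d : ℕ} (hf : f.IsHomogeneous d)
    (Q R : Fin 3 → F) : Polynomial.reflect d (linePoly f Q R) = linePoly f R Q := by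
  have hf' : f ∈ (homogeneousSubmodule (Fin 3) F 1) ^ d := by
    rw [homogeneousSubmodule_one_pow]; exact hf
  have hd := natDegree_lp hf Q R
  clear hd hf
  suffices (linePoly f Q R).natDegree ≤ d ∧ Polynomial.reflect d (linePoly f Q R) = linePoly f R Q from this.2
  induction hf' using Submodule.pow_induction_on_left' with
  | algebraMap r => simp [linePoly]
  | add x y i hx hy h1 h2 =>
    have e : ∀ Q R, linePoly (x + y) Q R = linePoly x Q R + linePoly y Q R := by intros; simp [linePoly]
    rw [e, e, Polynomial.reflect_add, h1.2, h2.2]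
    exact ⟨Polynomial.natDegree_add_le_of_degree_le h1.1 h2.1, rfl⟩
  | mem_mul m hm i x hx h =>
    have e : ∀ Q R, linePoly (m * x) Q R = linePoly m Q R * linePoly x Q R := by intros; simp [linePoly]
    have hm1 : (linePoly m Q R).natDegree ≤ 1 := natDegree_lp hm Q R
    have hm2 := reflect_lp_one hm Q R
    rw [e, e, Nat.succ_eq_add_one, add_comm i 1]
    refine ⟨Polynomial.natDegree_mul_le_of_le hm1 h.1, ?_⟩
    rw [Polynomial.reflect_mul _ _ hm1 h.1, hm2, h.2]

lemma coeff_top_lp {f : MvPolynomial (Fin 3) F} {d : ℕ} (hf : f.IsHomogeneous d)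
    (Q R : Fin 3 → F) : (linePoly f Q R).coeff d = MvPolynomial.eval Q f := by
  rw [← reflect_lp hf R Q, Polynomial.coeff_reflect, Polynomial.revAt_le le_rfl, Nat.sub_self,
    Polynomial.coeff_zero_eq_eval_zero, eval_lp]
  simp

lemma coeff_next_lp {f : MvPolynomial (Fin 3) F} {d : ℕ} (hf : f.IsHomogeneous (d + 1))
    (Q R : Fin 3 → F) : (linePoly f Q R).coeff d = gr f Q R := by
  rw [← reflect_lp hf R Q, Polynomial.coeff_reflect, Polynomial.revAt_le (by omega),
    show d + 1 - d = 0 + 1 by omega]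
  have := Polynomial.coeff_derivative (linePoly f R Q) 0
  simp only [Nat.cast_zero, zero_add, mul_one] at this
  rw [zero_add, ← this, Polynomial.coeff_zero_eq_eval_zero, eval_deriv_lp]
  simp

/-- `f` has a linear factor over `F`. -/
def HasLin (f : MvPolynomial (Fin 3) F) : Prop :=
  ∃ l g : MvPolynomial (Fin 3) F, l.IsHomogeneous 1 ∧ l ≠ 0 ∧ f = l * g

lemma hasLin_of_lp {f : MvPolynomial (Fin 3) F} {d : ℕ} (hf : f.IsHomogeneous d)
    (Q R : Fin 3 → F) (hQR : LinearIndependent F ![Q, R]) (h : linePoly f Q R = 0) : HasLin f := by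
  obtain ⟨S, hS⟩ := exists_linearIndependent_cons_of_lt_rank hQR
    (by rw [rank_fun', Fintype.card_fin]; norm_cast)
  let b : Module.Basis (Fin 3) F (Fin 3 → F) :=
    basisOfLinearIndependentOfCardEqFinrank hS (by simp)
  have b0 : b 0 = S := by simp [b]
  have b1 : b 1 = Q := by simp [b]
  have b2 : b 2 = R := by simp [b]
  let A : Fin 3 → MvPolynomial (Fin 3) F := fun j => ∑ i, C (b.repr (Pi.single i 1) j) * X i
  have hAe : ∀ x j, MvPolynomial.eval x (A j) = b.repr x j := by
    intro x j
    have hx : x = ∑ i, x i • (Pi.single i 1 : Fin 3 → F) := by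
      ext k; simp [Finset.sum_apply, Pi.single_apply]
    conv_rhs => rw [hx]
    simp only [A, map_sum, map_mul, eval_C, eval_X, map_smul, Finsupp.coe_finsetSum,
      Finset.sum_apply, Finsupp.coe_smul, Pi.smul_apply, smul_eq_mul]
    exact Finset.sum_congr rfl fun i _ => mul_comm _ _
  have hA0 : ∀ j, A j ≠ 0 := by
    intro j hj
    have := hAe (b j) j
    rw [hj] at this
    simp at this
  have hAh : ∀ j, (A j).IsHomogeneous 1 := by
    intro j
    exact IsHomogeneous.sum _ _ _ fun i _ => isHomogeneous_C_mul_X _ _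
  have hX : ∀ k, X k = A 0 * C (S k) + A 1 * C (Q k) + A 2 * C (R k) := by
    intro k
    have h1 : ∀ i, ∑ j, b.repr (Pi.single i 1) j * b j k = (Pi.single i 1 : Fin 3 → F) k := by
      intro i
      have := congrFun (b.sum_repr (Pi.single i 1)) k
      simpa [Finset.sum_apply] using this
    have h2 : ∑ j, A j * C (b j k) = X k := by
      simp only [A, Finset.sum_mul]
      rw [Finset.sum_comm]
      have : ∀ i, ∑ j, C ((b.repr (Pi.single i 1)) j) * X i * C (b j k) =
          C ((Pi.single i 1 : Fin 3 → F) k) * X i := by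
        intro i
        rw [← h1, map_sum, Finset.sum_mul]
        refine Finset.sum_congr rfl fun j _ => ?_
        rw [C_mul]; ring
      simp only [this]
      rw [Finset.sum_eq_single k]
      · simp
      · intro i _ hi; simp [hi.symm]
      · simp
    rw [← h2, Fin.sum_univ_three, b0, b1, b2]
  -- vanishing on the plane
  have hz : MvPolynomial.aeval (fun k => A 1 * C (Q k) + A 2 * C (R k)) f = 0 := by
    let K := FractionRing (MvPolynomial (Fin 3) F)
    have hinj : Function.Injective (algebraMap (MvPolynomial (Fin 3) F) K) :=
      IsFractionRing.injective _ _
    apply hinj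
    rw [map_zero, ← MvPolynomial.aeval_algebraMap_apply]
    have h2 : algebraMap (MvPolynomial (Fin 3) F) K (A 2) ≠ 0 := by
      rw [Ne, map_eq_zero_iff _ hinj]; exact hA0 2
    set α := algebraMap (MvPolynomial (Fin 3) F) K (A 1)
    set β := algebraMap (MvPolynomial (Fin 3) F) K (A 2)
    have e : (fun k => algebraMap (MvPolynomial (Fin 3) F) K (A 1 * C (Q k) + A 2 * C (R k))) =
        fun k => β * (Polynomial.aeval (α / β)
          (Polynomial.C (Q k) * Polynomial.X + Polynomial.C (R k))) := by
      ext k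
      have hC : ∀ a : F, algebraMap (MvPolynomial (Fin 3) F) K (C a) = algebraMap F K a := by
        intro a
        rw [IsScalarTower.algebraMap_apply F (MvPolynomial (Fin 3) F) K]; rfl
      simp only [map_add, map_mul, hC, Polynomial.aeval_C, Polynomial.aeval_X]
      change α * _ + β * _ = _
      have : α = β * (α / β) := (mul_div_cancel₀ _ h2).symm
      conv_lhs => rw [this]
      ring
    have e2 : (MvPolynomial.aeval fun k =>
        algebraMap (MvPolynomial (Fin 3) F) K (A 1 * C (Q k) + A 2 * C (R k))) f = 0 := by
      rw [e, aeval_smul_hom hf]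
      have : (MvPolynomial.aeval fun k => Polynomial.aeval (α / β)
          (Polynomial.C (Q k) * Polynomial.X + Polynomial.C (R k))) f =
          Polynomial.aeval (α / β) (linePoly f Q R) := by
        rw [linePoly, ← AlgHom.comp_apply, MvPolynomial.comp_aeval]
      rw [this, h]; simp
    exact e2
  have hdvd : A 0 ∣ f := by
    rw [← Ideal.mem_span_singleton, ← Ideal.Quotient.eq_zero_iff_mem]
    let π := Ideal.Quotient.mkₐ F (Ideal.span {A 0})
    have h1 : π f = MvPolynomial.aeval (fun k => π (X k)) f := by
      conv_lhs => rw [← MvPolynomial.aeval_X_left_apply f]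
      rw [← AlgHom.comp_apply, MvPolynomial.comp_aeval]
    have h2 : (fun k => π (X k)) = fun k => π (A 1 * C (Q k) + A 2 * C (R k)) := by
      ext k
      have : π (A 0) = 0 := Ideal.Quotient.eq_zero_iff_mem.2 (Ideal.mem_span_singleton_self _)
      rw [hX k]
      simp only [map_add, map_mul, this]
      ring
    have h3 : MvPolynomial.aeval (fun k => π (A 1 * C (Q k) + A 2 * C (R k))) f = 0 := by
      have : MvPolynomial.aeval (fun k => π (A 1 * C (Q k) + A 2 * C (R k))) f =
        π (MvPolynomial.aeval (fun k => A 1 * C (Q k) + A 2 * C (R k)) f) := by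
        rw [← AlgHom.comp_apply, MvPolynomial.comp_aeval]
      rw [this, hz, map_zero]
    change π f = 0
    rw [h1, h2, h3]
  obtain ⟨g, hg⟩ := hdvd
  exact ⟨A 0, g, hAh 0, hA0 0, hg⟩

attribute [local instance] MvPolynomial.gradedAlgebra

lemma HasLin.hom {f : MvPolynomial (Fin 3) F} {d : ℕ} (hf : f.IsHomogeneous (1 + d))
    (h : HasLin f) : ∃ l g : MvPolynomial (Fin 3) F, l.IsHomogeneous 1 ∧ l ≠ 0 ∧
      g.IsHomogeneous d ∧ f = l * g := by
  obtain ⟨l, g, hl, hl0, rfl⟩ := h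
  refine ⟨l, homogeneousComponent d g, hl, hl0, homogeneousComponent_isHomogeneous _ _, ?_⟩
  have h1 := DirectSum.coe_decompose_mul_add_of_left_mem (homogeneousSubmodule (Fin 3) F)
    (i := 1) (j := d) (a := l) (b := g) hl
  have h2 : ((DirectSum.decompose (homogeneousSubmodule (Fin 3) F) (l * g)) (1 + d) :
      MvPolynomial (Fin 3) F) = homogeneousComponent (1 + d) (l * g) :=
    decomposition.decompose'_apply _ _
  have h3 : ((DirectSum.decompose (homogeneousSubmodule (Fin 3) F) g) d :
      MvPolynomial (Fin 3) F) = homogeneousComponent d g :=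
    decomposition.decompose'_apply _ _
  rw [h2, h3, homogeneousComponent_eq_self hf] at h1
  exact h1

end general

section counting
variable {F : Type} [Field F] [Fintype F]

open Classical in
/-- Zero set in `F^3`. -/
def zs (f : MvPolynomial (Fin 3) F) : Finset (Fin 3 → F) :=
  Finset.univ.filter fun x => MvPolynomial.eval x f = 0

open Classical in
/-- Number of zeros on the line `t Q + R`. -/
def cnt (f : MvPolynomial (Fin 3) F) (Q R : Fin 3 → F) : ℕ :=
  (Finset.univ.filter fun t : F => MvPolynomial.eval (t • Q + R) f = 0).card

lemma mem_zs (f : MvPolynomial (Fin 3) F) (x : Fin 3 → F) :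
    x ∈ zs f ↔ MvPolynomial.eval x f = 0 := by simp [zs]

lemma sum_cnt (f : MvPolynomial (Fin 3) F) (Q : Fin 3 → F) :
    ∑ R, cnt f Q R = Fintype.card F * (zs f).card := by
  classical
  simp only [cnt, Finset.card_filter]
  rw [Finset.sum_comm]
  have : ∀ t : F, ∑ R, (if MvPolynomial.eval (t • Q + R) f = 0 then 1 else 0) = (zs f).card := by
    intro t
    rw [zs, Finset.card_filter]
    exact Equiv.sum_comp (Equiv.addLeft (t • Q))
      (fun x => if MvPolynomial.eval x f = 0 then 1 else 0)
  simp only [this]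
  simp

open Classical in
lemma cnt_eq_roots (f : MvPolynomial (Fin 3) F) (Q R : Fin 3 → F) (h : linePoly f Q R ≠ 0) :
    cnt f Q R = Multiset.card ((linePoly f Q R).roots.dedup) := by
  rw [cnt, ← Multiset.toFinset_val, Finset.card_val]
  congr 1
  ext t
  simp [h, Polynomial.IsRoot, eval_lp]

lemma cnt_le_of_natDegree (f : MvPolynomial (Fin 3) F) (Q R : Fin 3 → F) (h : linePoly f Q R ≠ 0)
    {n : ℕ} (hn : (linePoly f Q R).natDegree ≤ n) : cnt f Q R ≤ n := by
  classical
  rw [cnt_eq_roots f Q R h]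
  exact (Multiset.card_le_card (Multiset.dedup_le _)).trans ((Polynomial.card_roots' _).trans hn)

lemma natDegree_lp_one {f : MvPolynomial (Fin 3) F} {e : ℕ} (hf : f.IsHomogeneous (e + 2))
    (Q R : Fin 3 → F) (hQ : MvPolynomial.eval Q f = 0) : (linePoly f Q R).natDegree ≤ e + 1 := by
  rw [Polynomial.natDegree_le_iff_coeff_eq_zero]
  intro N hN
  rcases Nat.lt_or_ge (e + 2) N with h | h
  · exact Polynomial.coeff_eq_zero_of_natDegree_lt ((natDegree_lp hf Q R).trans_lt h)
  · obtain rfl : N = e + 2 := by omega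
    rw [coeff_top_lp hf, hQ]

lemma natDegree_lp_two {f : MvPolynomial (Fin 3) F} {e : ℕ} (hf : f.IsHomogeneous (e + 2))
    (Q R : Fin 3 → F) (hQ : MvPolynomial.eval Q f = 0) (hR : gr f Q R = 0) :
    (linePoly f Q R).natDegree ≤ e := by
  rw [Polynomial.natDegree_le_iff_coeff_eq_zero]
  intro N hN
  rcases Nat.lt_or_ge (e + 1) N with h | h
  · exact Polynomial.coeff_eq_zero_of_natDegree_lt ((natDegree_lp_one hf Q R hQ).trans_lt h)
  · obtain rfl : N = e + 1 := by omega
    rw [coeff_next_lp hf, hR]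

open Classical in
lemma ker_card_ge {W : Type} [AddCommGroup W] [Module F W] [FiniteDimensional F W] 
    (L : (Fin 3 → F) →ₗ[F] W) :
    Fintype.card F ^ (3 - Module.finrank F W) ≤ (Finset.univ.filter fun x => L x = 0).card := by
  have h1 := L.finrank_range_add_finrank_ker
  have h2 : Module.finrank F (LinearMap.range L) ≤ Module.finrank F W := Submodule.finrank_le _
  have h3 : (Finset.univ.filter fun x => L x = 0).card = Fintype.card (LinearMap.ker L) := by
    rw [Fintype.card_subtype]
    rfl
  rw [h3, Module.card_eq_pow_finrank (K := F) (V := LinearMap.ker L)]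
  refine Nat.pow_le_pow_right (Fintype.card_pos (α := F)) ?_
  simp at h1
  omega

open Classical in
lemma ker_card_eq (L : (Fin 3 → F) →ₗ[F] F) (hL : L ≠ 0) :
    (Finset.univ.filter fun x => L x = 0).card = Fintype.card F ^ 2 := by
  have h1 := L.finrank_range_add_finrank_ker
  have h2 : LinearMap.range L = ⊤ := LinearMap.range_eq_top.2 (LinearMap.surjective hL)
  have h3 : (Finset.univ.filter fun x => L x = 0).card = Fintype.card (LinearMap.ker L) := by
    rw [Fintype.card_subtype]
    rfl
  rw [h3, Module.card_eq_pow_finrank (K := F)]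
  congr 1
  rw [h2] at h1
  simp at h1
  omega

open Classical in
/-- scalar multiples of `Q` -/
def mult (Q : Fin 3 → F) : Finset (Fin 3 → F) := Finset.univ.image fun a : F => a • Q

lemma card_mult (Q : Fin 3 → F) (hQ : Q ≠ 0) : (mult Q).card = Fintype.card F := by
  classical
  rw [mult, Finset.card_image_of_injective _ (smul_left_injective F hQ), Finset.card_univ]

lemma not_mem_mult (Q R : Fin 3 → F) (hQ : Q ≠ 0) :
    R ∉ mult Q ↔ LinearIndependent F ![Q, R] := by
  rw [LinearIndependent.pair_iff' hQ, mult]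
  simp

open Classical in
/-- tangent directions -/
def tg (f : MvPolynomial (Fin 3) F) (Q : Fin 3 → F) : Finset (Fin 3 → F) :=
  (Finset.univ.filter fun x => gr f Q x = 0) \ mult Q

lemma card_tg (f : MvPolynomial (Fin 3) F) (Q : Fin 3 → F) (hQ : Q ≠ 0) :
    Fintype.card F ^ 2 ≤ (tg f Q).card + Fintype.card F := by
  classical
  have h1 := ker_card_ge (gr f Q)
  simp only [Module.finrank_self, show 3 - 1 = 2 from rfl] at h1
  have h2 := Finset.le_card_sdiff (mult Q) (Finset.univ.filter fun x => gr f Q x = 0)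
  rw [card_mult Q hQ] at h2
  rw [tg]
  omega

open Classical in
lemma pointwise_le {f : MvPolynomial (Fin 3) F} {e : ℕ} (hf : f.IsHomogeneous (e + 2))
    (hl : ¬ HasLin f) (Q : Fin 3 → F) (hQ0 : Q ≠ 0) (hQ : MvPolynomial.eval Q f = 0)
    (R : Fin 3 → F) : cnt f Q R + (if R ∈ tg f Q then 1 else 0) ≤
      if R ∈ mult Q then Fintype.card F else e + 1 := by
  by_cases hR : R ∈ mult Q
  · simp only [hR, if_true, tg, Finset.mem_sdiff, not_true, and_false, if_false, add_zero]
    exact Finset.card_le_univ _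
  · have hi := (not_mem_mult Q R hQ0).1 hR
    have hp : linePoly f Q R ≠ 0 := fun h => hl (hasLin_of_lp hf Q R hi h)
    by_cases ht : gr f Q R = 0
    · have := cnt_le_of_natDegree f Q R hp (natDegree_lp_two hf Q R hQ ht)
      simp [hR, tg, ht, this]
    · have := cnt_le_of_natDegree f Q R hp (natDegree_lp_one hf Q R hQ)
      simp [hR, tg, ht, this]

open Classical in
lemma sum_rhs (Q : Fin 3 → F) (hQ0 : Q ≠ 0) (e : ℕ) :
    ∑ R, (if R ∈ mult Q then Fintype.card F else e + 1) + Fintype.card F * (e + 1)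
      = Fintype.card F ^ 2 + Fintype.card F ^ 3 * (e + 1) := by
  have h1 : ∀ R : Fin 3 → F, (if R ∈ mult Q then Fintype.card F else e + 1) +
      (if R ∈ mult Q then e + 1 else 0) = (if R ∈ mult Q then Fintype.card F else 0) + (e + 1) := by
    intro R; split_ifs <;> omega
  have h2 := Finset.sum_congr (s₁ := Finset.univ) rfl fun R _ => h1 R
  simp only [Finset.sum_add_distrib, Finset.sum_ite_mem, Finset.univ_inter, Finset.sum_const,
    card_mult Q hQ0, Finset.card_univ, Fintype.card_fun, Fintype.card_fin, smul_eq_mul] at h2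
  linarith

lemma bound_at {f : MvPolynomial (Fin 3) F} {e m : ℕ} (hm : Fintype.card F = m + 1)
    (hf : f.IsHomogeneous (e + 2))
    (hl : ¬ HasLin f) (Q : Fin 3 → F) (hQ0 : Q ≠ 0) (hQ : MvPolynomial.eval Q f = 0) :
    (zs f).card ≤ 1 + m * ((e + 1) * (m + 2)) ∧
    ((zs f).card = 1 + m * ((e + 1) * (m + 2)) → ∀ R, R ∉ mult Q →
      ((gr f Q R = 0 → cnt f Q R = e) ∧ (gr f Q R ≠ 0 → cnt f Q R = e + 1))) := by
  classical
  have h1 := pointwise_le hf hl Q hQ0 hQ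
  have h2 := Finset.sum_le_sum (s := Finset.univ) fun R _ => h1 R
  have h3 := sum_rhs Q hQ0 e
  have h8 := Finset.sum_eq_sum_iff_of_le (s := Finset.univ) fun R _ => h1 R
  have h4 := card_tg f Q hQ0
  have h5 : ∑ R, (cnt f Q R + (if R ∈ tg f Q then 1 else 0)) =
      Fintype.card F * (zs f).card + (tg f Q).card := by
    rw [Finset.sum_add_distrib, sum_cnt]
    simp
  generalize ∑ R, (if R ∈ mult Q then Fintype.card F else e + 1) = T at *
  rw [hm] at h3 h4 h5
  constructor
  · rw [h5] at h2
    have : (m + 1) * (zs f).card ≤ (m + 1) * (1 + m * ((e + 1) * (m + 2))) := by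
      nlinarith
    exact Nat.le_of_mul_le_mul_left this (by omega)
  · intro heq R hR
    have h6 : ∑ R, (cnt f Q R + (if R ∈ tg f Q then 1 else 0)) =
      T := by
      apply le_antisymm h2
      rw [h5, heq]
      nlinarith
    have h7 := h8.1 h6 R (Finset.mem_univ _)
    simp only [hR, if_false, tg, Finset.mem_sdiff, not_false_iff, and_true, Finset.mem_filter,
      Finset.mem_univ, true_and] at h7
    constructor
    · intro h; simp only [h, if_true] at h7; omega
    · intro h; simp only [h, if_false] at h7; omega

lemma strict {f : MvPolynomial (Fin 3) F} {e m : ℕ} (hm : Fintype.card F = m + 1) (hm1 : 1 ≤ m)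
    (he : 1 ≤ e) (hf : f.IsHomogeneous (e + 2)) (hl : ¬ HasLin f) :
    (zs f).card ≠ 1 + m * ((e + 1) * (m + 2)) := by
  classical
  intro heq
  have hex : ∃ Q ∈ zs f, Q ≠ 0 := by
    by_contra! h
    have : zs f ⊆ {0} := by
      intro x hx; simpa using h x hx
    have := Finset.card_le_card this
    rw [heq, Finset.card_singleton] at this
    have : 0 < m * ((e + 1) * (m + 2)) := by positivity
    omega
  obtain ⟨Q, hQ, hQ0⟩ := hex
  rw [mem_zs] at hQ
  have hB := (bound_at hm hf hl Q hQ0 hQ).2 heq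
  have ht : 0 < (tg f Q).card := by
    have := card_tg f Q hQ0
    rw [hm] at this
    nlinarith
  obtain ⟨R, hR⟩ := Finset.card_pos.1 ht
  simp only [tg, Finset.mem_sdiff, Finset.mem_filter, Finset.mem_univ, true_and] at hR
  obtain ⟨hgR, hRm⟩ := hR
  have hc := (hB R hRm).1 hgR
  have hi := (not_mem_mult Q R hQ0).1 hRm
  have hp : linePoly f Q R ≠ 0 := fun h => hl (hasLin_of_lp hf Q R hi h)
  have hdeg := natDegree_lp_two hf Q R hQ hgR
  have hex : ∃ t : F, MvPolynomial.eval (t • Q + R) f = 0 := by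
    have : 0 < cnt f Q R := by omega
    rw [cnt, Finset.card_pos] at this
    obtain ⟨t, ht⟩ := this
    exact ⟨t, by simpa using ht⟩
  obtain ⟨t, ht⟩ := hex
  have hnd : (linePoly f Q R).roots.Nodup := by
    rw [← Multiset.dedup_eq_self]
    apply Multiset.eq_of_le_of_card_le (Multiset.dedup_le _)
    have h1 := cnt_eq_roots f Q R hp
    have h2 := Polynomial.card_roots' (linePoly f Q R)
    have e1 : ∀ [DecidableEq F], (linePoly f Q R).roots.card ≤ (linePoly f Q R).roots.dedup.card := by
      intro _
      have : (linePoly f Q R).roots.dedup.card = e := by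
        rw [← hc, h1]; congr!
      omega
    exact e1
  have hd : (Polynomial.derivative (linePoly f Q R)).eval t ≠ 0 := by
    intro h
    have h1 : 1 < (linePoly f Q R).rootMultiplicity t := by
      rw [Polynomial.one_lt_rootMultiplicity_iff_isRoot hp]
      exact ⟨by rw [Polynomial.IsRoot, eval_lp]; exact ht, h⟩
    rw [← Polynomial.count_roots] at h1
    have := Multiset.nodup_iff_count_le_one.1 hnd t
    omega
  rw [eval_deriv_lp] at hd
  set Q' := t • Q + R with hQ'
  have hpair := LinearIndependent.pair_iff.1 hi
  have hQ'0 : Q' ≠ 0 := by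
    intro h
    have := hpair t 1 (by rw [one_smul]; exact h)
    simp at this
  have hQm : Q ∉ mult Q' := by
    intro h
    simp only [mult, Finset.mem_image, Finset.mem_univ, true_and] at h
    obtain ⟨a, ha⟩ := h
    have := hpair (a * t - 1) a (by
      have : (a * t - 1) • Q + a • R = a • (t • Q + R) - Q := by module
      rw [this, ← hQ', ha, sub_self])
    obtain ⟨h1, h2⟩ := this
    rw [h2] at h1
    simp at h1
  have hc' := (((bound_at hm hf hl Q' hQ'0 ht).2 heq) Q hQm).2 hd
  have hle : cnt f Q' Q ≤ cnt f Q R := by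
    refine Finset.card_le_card_of_injOn (fun s => t + s⁻¹) ?_ ?_
    · intro s hs
      simp only [Finset.coe_filter, Finset.mem_univ, true_and, Set.mem_ofPred_eq] at hs ⊢
      by_cases hs0 : s = 0
      · subst hs0; simpa using ht
      · have h1 : (t + s⁻¹) • Q + R = s⁻¹ • (s • Q' + Q) := by
          rw [hQ', smul_add, smul_smul, inv_mul_cancel₀ hs0]
          module
        rw [h1, eval_smul_hom hf, hs, mul_zero]
    · intro a _ b _ h
      simpa using h
  omega

/-- Number of points version. -/
lemma zs_eq {f : MvPolynomial (Fin 3) F} {d m : ℕ} (hm : Fintype.card F = m + 1)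
    (hf : f.IsHomogeneous d) (hd : d ≠ 0) :
    (zs f).card + m * {x : Projectivization F (Fin 3 → F) | MvPolynomial.eval x.rep f ≠ 0}.ncard
      = 1 + m * (m ^ 2 + 3 * m + 3) := by
  classical
  let S := {x : Projectivization F (Fin 3 → F) | MvPolynomial.eval x.rep f ≠ 0}
  let φ : Fˣ × S → {x : Fin 3 → F // MvPolynomial.eval x f ≠ 0} := fun p =>
    ⟨(p.1 : F) • p.2.1.rep, by
      rw [eval_smul_hom hf]
      exact mul_ne_zero (pow_ne_zero _ p.1.ne_zero) p.2.2⟩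
  have hφ : Function.Bijective φ := by
    constructor
    · rintro ⟨u, P, hP⟩ ⟨u', P', hP'⟩ h
      have h : (u : F) • P.rep = (u' : F) • P'.rep := congrArg Subtype.val h
      have hPP : P = P' := by
        rw [← P.mk_rep, ← P'.mk_rep, Projectivization.mk_eq_mk_iff]
        refine ⟨u⁻¹ * u', ?_⟩
        rw [mul_smul]
        change u⁻¹ • ((u' : F) • P'.rep) = P.rep
        rw [← h]
        change u⁻¹ • (u • P.rep) = P.rep
        rw [inv_smul_smul]
      subst hPP
      have := smul_left_injective F P.rep_nonzero h
      have : u = u' := Units.ext this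
      subst this
      rfl
    · rintro ⟨x, hx⟩
      have hx0 : x ≠ 0 := by
        rintro rfl
        apply hx
        have := eval_smul_hom hf 0 0
        rwa [zero_smul, zero_pow hd, zero_mul] at this
      obtain ⟨a, ha⟩ := Projectivization.exists_smul_eq_mk_rep F x hx0
      refine ⟨⟨a⁻¹, Projectivization.mk F x hx0, ?_⟩, ?_⟩
      · change MvPolynomial.eval (Projectivization.mk F x hx0).rep f ≠ 0
        rw [← ha]
        change MvPolynomial.eval ((a : F) • x) f ≠ 0
        rw [eval_smul_hom hf]
        exact mul_ne_zero (pow_ne_zero _ a.ne_zero) hx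
      · apply Subtype.ext
        change a⁻¹ • (Projectivization.mk F x hx0).rep = x
        rw [← ha, inv_smul_smul]
  have h1 := Nat.card_congr (Equiv.ofBijective φ hφ)
  rw [Nat.card_prod, Nat.card_eq_fintype_card, Fintype.card_units, hm, Nat.add_sub_cancel,
    Nat.card_coe_set_eq] at h1
  rw [h1, Nat.card_eq_fintype_card, Fintype.card_subtype, zs,
    Finset.card_filter_add_card_filter_not, Finset.card_univ, Fintype.card_fun, hm,
    Fintype.card_fin]
  ring

end counting

section bounds
variable {F : Type} [Field F] [Fintype F]

lemma zs_card_pos {f : MvPolynomial (Fin 3) F} {d : ℕ} (hf : f.IsHomogeneous d) (hd : d ≠ 0) :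
    (0 : Fin 3 → F) ∈ zs f := by
  rw [mem_zs]
  have := eval_smul_hom hf 0 0
  rwa [zero_smul, zero_pow hd, zero_mul] at this

lemma nolin_bound {f : MvPolynomial (Fin 3) F} {e m : ℕ} (hm : Fintype.card F = m + 1)
    (hf : f.IsHomogeneous (e + 2)) (hl : ¬ HasLin f) :
    (zs f).card ≤ 1 + m * ((e + 1) * (m + 2)) := by
  classical
  by_cases hex : ∃ Q ∈ zs f, Q ≠ 0
  · obtain ⟨Q, hQ, hQ0⟩ := hex
    exact (bound_at hm hf hl Q hQ0 ((mem_zs _ _).1 hQ)).1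
  · push Not at hex
    have : zs f ⊆ {0} := by
      intro x hx; simpa using hex x hx
    have := Finset.card_le_card this
    rw [Finset.card_singleton] at this
    omega

lemma nolin_bound' {f : MvPolynomial (Fin 3) F} {e m : ℕ} (hm : Fintype.card F = m + 1)
    (hm1 : 1 ≤ m) (he : 1 ≤ e) (hf : f.IsHomogeneous (e + 2)) (hl : ¬ HasLin f) :
    (zs f).card + m ≤ 1 + m * ((e + 1) * (m + 2)) := by
  have h1 := lt_of_le_of_ne (nolin_bound hm hf hl) (strict hm hm1 he hf hl)
  have h2 := zs_eq hm hf (by omega)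
  generalize (zs f).card = z at *
  generalize Set.ncard _ = M at *
  generalize (e + 1) * (m + 2) = X at *
  generalize m ^ 2 + 3 * m + 3 = K at *
  zify at *
  by_contra h
  push Not at h
  have h3 : (M : ℤ) < K - X + 1 := by
    by_contra h'
    push Not at h'
    nlinarith
  nlinarith

lemma lin_form {l : MvPolynomial (Fin 3) F} (hl : l.IsHomogeneous 1) :
    ∃ c : Fin 3 → F, l = ∑ i, C (c i) * X i := by
  have : l ∈ homogeneousSubmodule (Fin 3) F 1 := hl
  rw [homogeneousSubmodule_one_eq_span_X, Submodule.mem_span_range_iff_exists_fun] at this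
  obtain ⟨c, hc⟩ := this
  exact ⟨c, by rw [← hc]; simp [MvPolynomial.smul_eq_C_mul]⟩

lemma lin_map {l : MvPolynomial (Fin 3) F} (hl : l.IsHomogeneous 1) (h0 : l ≠ 0) :
    ∃ L : (Fin 3 → F) →ₗ[F] F, L ≠ 0 ∧ ∀ x, MvPolynomial.eval x l = L x := by
  obtain ⟨c, rfl⟩ := lin_form hl
  refine ⟨∑ i, c i • LinearMap.proj i, ?_, fun x => by simp⟩
  intro h
  apply h0
  have : ∀ i, c i = 0 := by
    intro i
    have := LinearMap.congr_fun h (Pi.single i 1)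
    simpa [Pi.single_apply] using this
  simp [this]

lemma zs_lin {l : MvPolynomial (Fin 3) F} (hl : l.IsHomogeneous 1) (h0 : l ≠ 0) :
    (zs l).card = Fintype.card F ^ 2 := by
  classical
  obtain ⟨L, hL, h⟩ := lin_map hl h0
  rw [← ker_card_eq L hL, zs]
  congr 1
  ext x
  simp [h]

lemma zs_lin_inter {l l' : MvPolynomial (Fin 3) F} (hl : l.IsHomogeneous 1) (h0 : l ≠ 0)
    (hl' : l'.IsHomogeneous 1) (h0' : l' ≠ 0) [DecidableEq (Fin 3 → F)] :
    Fintype.card F ≤ (zs l ∩ zs l').card := by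
  classical
  obtain ⟨L, hL, h⟩ := lin_map hl h0
  obtain ⟨L', hL', h'⟩ := lin_map hl' h0'
  have := ker_card_ge (L.prod L')
  rw [Module.finrank_prod, Module.finrank_self, show 3 - (1 + 1) = 1 from rfl, pow_one] at this
  refine this.trans (le_of_eq ?_)
  congr 1
  ext x
  simp [mem_zs, h, h']

open Classical in
lemma zs_mul (f g : MvPolynomial (Fin 3) F) : zs (f * g) = zs f ∪ zs g := by
  ext x
  simp [mem_zs]

open Classical in
lemma zs_union_le {f g : MvPolynomial (Fin 3) F} {a b : ℕ} (hf : f.IsHomogeneous a) (ha : a ≠ 0)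
    (hg : g.IsHomogeneous b) (hb : b ≠ 0) : (zs (f * g)).card + 1 ≤ (zs f).card + (zs g).card := by
  rw [zs_mul, ← Finset.card_union_add_card_inter]
  have : 0 < (zs f ∩ zs g).card := Finset.card_pos.2
    ⟨0, Finset.mem_inter.2 ⟨zs_card_pos hf ha, zs_card_pos hg hb⟩⟩
  omega

lemma main_bound {E : Type} [Field E] [Algebra F E] {v : Fin 3 → E}
    (hv : LinearIndependent F v) {f : MvPolynomial (Fin 3) F} {m : ℕ}
    (hm : Fintype.card F = m + 1) (hm1 : 1 ≤ m)
    (hf : f.IsHomogeneous 4) (hf0 : f ≠ 0) (hfv : MvPolynomial.aeval v f = 0) :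
    (zs f).card ≤ 1 + m * (3 * m + 5) := by
  classical
  have hlin : ∀ l : MvPolynomial (Fin 3) F, l.IsHomogeneous 1 → l ≠ 0 →
      MvPolynomial.aeval v l ≠ 0 := by
    intro l hl h0 h
    obtain ⟨c, rfl⟩ := lin_form hl
    apply h0
    have := Fintype.linearIndependent_iff.1 hv c (by simpa [Algebra.smul_def] using h)
    simp [this]
  by_cases h1 : HasLin f
  · obtain ⟨l, g, hl, hl0, hg, rfl⟩ := h1.hom (d := 3) hf
    have hg0 : g ≠ 0 := right_ne_zero_of_mul hf0
    have hgv : MvPolynomial.aeval v g = 0 := by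
      rw [map_mul] at hfv
      exact (mul_eq_zero.1 hfv).resolve_left (hlin l hl hl0)
    have hzl := zs_lin hl hl0
    rw [hm] at hzl
    by_cases h2 : HasLin g
    · obtain ⟨l', h, hl', hl0', hh, rfl⟩ := h2.hom (d := 2) hg
      have hh0 : h ≠ 0 := right_ne_zero_of_mul hg0
      have hhv : MvPolynomial.aeval v h = 0 := by
        rw [map_mul] at hgv
        exact (mul_eq_zero.1 hgv).resolve_left (hlin l' hl' hl0')
      have h3 : ¬ HasLin h := by
        intro h3
        obtain ⟨l1, l2, hl1, hl10, hl2, rfl⟩ := h3.hom (d := 1) hh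
        rw [map_mul] at hhv
        rcases mul_eq_zero.1 hhv with h | h
        · exact hlin l1 hl1 hl10 h
        · exact hlin l2 hl2 (right_ne_zero_of_mul hh0) h
      have b1 := nolin_bound (e := 0) hm hh h3
      have hzl' := zs_lin hl' hl0'
      rw [hm] at hzl'
      have b2 := zs_lin_inter hl hl0 hl' hl0'
      rw [hm] at b2
      have b3 := Finset.card_union_add_card_inter (zs l) (zs l')
      rw [← zs_mul] at b3
      have b4 := zs_union_le (hl.mul hl') (by norm_num) hh (by norm_num)
      rw [mul_assoc] at b4
      nlinarith
    · have b1 := nolin_bound' (e := 1) hm hm1 le_rfl hg h2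
      have b2 := zs_union_le hl (by norm_num) hg (by norm_num)
      nlinarith
  · have b1 := nolin_bound' (e := 2) hm hm1 (by norm_num) hf h1
    nlinarith

end bounds

section dims
variable {F : Type} [Field F]

lemma finrank_hom4 : Module.finrank F (homogeneousSubmodule (Fin 3) F 4) = 15 := by
  classical
  let b : {d : Fin 3 →₀ ℕ // d ∈ Finset.finsuppAntidiag Finset.univ 4} → MvPolynomial (Fin 3) F :=
    fun d => basisMonomials (Fin 3) F d.1
  have hb : LinearIndependent F b :=
    (basisMonomials (Fin 3) F).linearIndependent.comp _ Subtype.val_injective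
  have hs : homogeneousSubmodule (Fin 3) F 4 = Submodule.span F (Set.range b) := by
    rw [homogeneousSubmodule_eq_finsupp_supported, AddMonoidAlgebra.supported_eq_span_single]
    congr 1
    ext x
    simp [b, Finset.mem_finsuppAntidiag, Finsupp.degree_eq_sum, single_eq_monomial]
  rw [hs, finrank_span_eq_card hb, Fintype.card_coe, Finset.card_finsuppAntidiag_nat_eq_choose]
  rfl

lemma indepF {E : Type} [Fintype F] [Field E] [Algebra F E] (v : Fin 3 → E) (q : ℕ)
    (hF : Fintype.card F = q)
    (hv : LinearIndependent E ![v, fun i => v i ^ q, fun i => v i ^ q ^ 2]) :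
    LinearIndependent F v := by
  rw [Fintype.linearIndependent_iff]
  intro c hc
  let φ := FiniteField.frobeniusAlgHom F E
  have hφ : ∀ x, φ x = x ^ q := by intro x; rw [← hF]; rfl
  have h1 : ∑ i, c i • v i ^ q = 0 := by
    have := congrArg φ hc
    simp only [map_zero, map_sum, map_smul] at this
    simpa only [hφ] using this
  have h2 : ∑ i, c i • v i ^ q ^ 2 = 0 := by
    have := congrArg φ h1
    simp only [map_zero, map_sum, map_smul] at this
    simp only [hφ, ← pow_mul] at this
    rw [← this]
    simp [pow_two]
  let A : Matrix (Fin 3) (Fin 3) E := Matrix.of ![v, fun i => v i ^ q, fun i => v i ^ q ^ 2]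
  have hA : IsUnit A := Matrix.linearIndependent_rows_iff_isUnit.1 hv
  have hz : A.mulVec (fun i => algebraMap F E (c i)) = A.mulVec 0 := by
    rw [Matrix.mulVec_zero]
    ext j
    simp only [Matrix.mulVec, dotProduct, Pi.zero_apply]
    fin_cases j
    · simpa [A, Algebra.smul_def, mul_comm] using hc
    · simpa [A, Algebra.smul_def, mul_comm] using h1
    · simpa [A, Algebra.smul_def, mul_comm] using h2
  have := Matrix.mulVec_injective_of_isUnit hA hz
  intro i
  have := congrFun this i
  simpa using this

lemma finrank12 {E : Type} [Field E] [Algebra F E] [FiniteDimensional F E]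
    (h3 : Module.finrank F E = 3) (v : Fin 3 → E)
    (hv : LinearIndependent F v) :
    Module.finrank F
      ↥(homogeneousSubmodule (Fin 3) F 4 ⊓
          LinearMap.ker (MvPolynomial.aeval (R := F) v).toLinearMap) = 12 := by
  let b : Module.Basis (Fin 3) F E := basisOfLinearIndependentOfCardEqFinrank hv (by simp [h3])
  have hb : ∀ i, b i = v i := by intro i; simp [b]
  let ψ := (MvPolynomial.aeval (R := F) v).toLinearMap.domRestrict (homogeneousSubmodule (Fin 3) F 4)
  have hsurj : Function.Surjective ψ := by
    intro e
    have key : ∀ e : E, ∃ l : MvPolynomial (Fin 3) F, l.IsHomogeneous 1 ∧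
        MvPolynomial.aeval v l = e := by
      intro e
      refine ⟨∑ i, C (b.repr e i) * X i,
        IsHomogeneous.sum _ _ _ fun i _ => isHomogeneous_C_mul_X _ _, ?_⟩
      conv_rhs => rw [← b.sum_repr e]
      simp [hb, Algebra.smul_def]
    obtain ⟨l1, hl1, h1⟩ := key 1
    obtain ⟨l2, hl2, h2⟩ := key e
    refine ⟨⟨l1 ^ 3 * l2, (hl1.pow 3).mul hl2⟩, ?_⟩
    change MvPolynomial.aeval v (l1 ^ 3 * l2) = e
    simp [h1, h2]
  have : Module.Finite F (homogeneousSubmodule (Fin 3) F 4) :=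
    Module.finite_of_finrank_pos (by rw [finrank_hom4]; norm_num)
  have h4 := ψ.finrank_range_add_finrank_ker
  rw [LinearMap.range_eq_top.2 hsurj, finrank_top, h3, finrank_hom4] at h4
  have h5 : Module.finrank F (LinearMap.ker ψ) = Module.finrank F
      ↥(homogeneousSubmodule (Fin 3) F 4 ⊓
          LinearMap.ker (MvPolynomial.aeval (R := F) v).toLinearMap) := by
    rw [LinearMap.ker_domRestrict, ← Submodule.map_comap_subtype]
    exact (Submodule.finrank_map_subtype_eq _ _).symm
  omega

end dims

section existence
variable {F : Type} [Field F] [Fintype F]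

/-- There are two distinct monic quadratics without roots. -/
lemma two_irred {q : ℕ} (hF : Fintype.card F = q) (hq : 4 ≤ q) :
    ∃ b c b' c' : F, (b ≠ b' ∨ c ≠ c') ∧ (∀ t : F, c + b * t + t ^ 2 ≠ 0) ∧
      (∀ t : F, c' + b' * t + t ^ 2 ≠ 0) := by
  classical
  let g : Sym2 F → F × F := Sym2.lift ⟨fun r s => (-(r + s), r * s), fun r s => by
    simp [add_comm, mul_comm]⟩
  let S : Finset (F × F) := Finset.univ.image g
  have hS : S.card ≤ (q + 1).choose 2 := by
    refine Finset.card_image_le.trans ?_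
    rw [Finset.card_univ, Sym2.card, hF]
  have hc : S.card + Sᶜ.card = q * q := by
    rw [Finset.card_add_card_compl, Fintype.card_prod, hF]
  have h1 : 1 < Sᶜ.card := by
    rw [Nat.choose_two_right] at hS
    simp only [Nat.add_sub_cancel] at hS
    have : 2 * S.card ≤ (q + 1) * q := by omega
    nlinarith
  obtain ⟨⟨b, c⟩, h, ⟨b', c'⟩, h', hne⟩ := Finset.one_lt_card.1 h1
  have key : ∀ b c : F, (b, c) ∈ Sᶜ → ∀ t : F, c + b * t + t ^ 2 ≠ 0 := by
    intro b c hbc t ht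
    apply Finset.mem_compl.1 hbc
    refine Finset.mem_image.2 ⟨s(t, -b - t), Finset.mem_univ _, ?_⟩
    simp only [g, Sym2.lift_mk, Prod.mk.injEq]
    constructor
    · ring
    · linear_combination -ht
  refine ⟨b, c, b', c', ?_, key b c h, key b' c' h'⟩
  by_contra hcon
  push Not at hcon
  exact hne (by rw [hcon.1, hcon.2])

lemma exists_forms {E : Type} [Field E] [Fintype E] [Algebra F E]
    (h3 : Module.finrank F E = 3) {v : Fin 3 → E} (hv : LinearIndependent F v) :
    ∃ (τ : E) (l : Fin 3 → MvPolynomial (Fin 3) F), (∀ i, (l i).IsHomogeneous 1) ∧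
      (∀ i, aeval v (l i) = τ ^ (i : ℕ)) ∧
      Function.Bijective (fun (x : Fin 3 → F) (i : Fin 3) => eval x (l i)) := by
  have : FiniteDimensional F E := Module.finite_of_finrank_pos (by omega)
  let b : Module.Basis (Fin 3) F E := basisOfLinearIndependentOfCardEqFinrank hv (by simp [h3])
  have hb : ∀ i, b i = v i := by intro i; simp [b]
  let pb := Field.powerBasisOfFiniteOfSeparable F E
  have hd : pb.dim = 3 := by rw [← pb.finrank, h3]
  let a : Module.Basis (Fin 3) F E := pb.basis.reindex (finCongr hd)
  have ha : ∀ i, a i = pb.gen ^ (i : ℕ) := by intro i; simp [a]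
  refine ⟨pb.gen, fun j => ∑ i, C (b.repr (a j) i) * X i,
    fun j => IsHomogeneous.sum _ _ _ fun i _ => isHomogeneous_C_mul_X _ _, ?_, ?_⟩
  · intro j
    rw [← ha j]
    conv_rhs => rw [← b.sum_repr (a j)]
    simp [hb, Algebra.smul_def]
  · have hU : IsUnit (b.toMatrix a) := by
      let _ := b.invertibleToMatrix a
      exact isUnit_of_invertible _
    have hU' : IsUnit (b.toMatrix a).transpose := by
      rwa [Matrix.isUnit_transpose]
    have hinj := Matrix.mulVec_injective_of_isUnit hU'
    have heq : (fun (x : Fin 3 → F) (j : Fin 3) =>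
        eval x (∑ i, C (b.repr (a j) i) * X i)) = (b.toMatrix a).transpose.mulVec := by
      ext x j
      simp [Matrix.mulVec, dotProduct, Module.Basis.toMatrix_apply]
    rw [heq]
    exact Finite.injective_iff_bijective.1 hinj

lemma exists_extremal {E : Type} [Field E] [Fintype E] [Algebra F E]
    (h3 : Module.finrank F E = 3) {v : Fin 3 → E} (hv : LinearIndependent F v)
    {m : ℕ} (hm : Fintype.card F = m + 1) (hm3 : 3 ≤ m) :
    ∃ f : MvPolynomial (Fin 3) F, f.IsHomogeneous 4 ∧ f ≠ 0 ∧ aeval v f = 0 ∧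
      1 + m * (3 * m + 5) ≤ (zs f).card := by
  classical
  obtain ⟨b, c, b', c', hne, h1, h2⟩ := two_irred hm (by omega)
  obtain ⟨τ, l, hl, hlv, hbij⟩ := exists_forms h3 hv
  let s : (Fin 3 → F) → (Fin 3 → F) := Function.surjInv hbij.2
  have hs : ∀ y i, eval (s y) (l i) = y i := fun y i =>
    congrFun (Function.surjInv_eq hbij.2 y) i
  have hsi : Function.Injective s := Function.injective_surjInv hbij.2
  have hext : ∀ x y : Fin 3 → F, eval x (l 0) = eval y (l 0) → eval x (l 1) = eval y (l 1) →
      eval x (l 2) = eval y (l 2) → x = y := by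
    intro x y e0 e1 e2
    apply hbij.1
    ext i
    fin_cases i
    exacts [e0, e1, e2]
  let Q : MvPolynomial (Fin 3) F := l 1 * l 1 - l 0 * l 2
  let L : F → F → MvPolynomial (Fin 3) F := fun b c => C c * l 0 + C b * l 1 + l 2
  have hL : ∀ b c, (L b c).IsHomogeneous 1 := by
    intro b c
    have k : ∀ (c : F) i, (C c * l i).IsHomogeneous 1 := by
      intro c i
      have := (isHomogeneous_C (Fin 3) c).mul (hl i)
      rwa [zero_add] at this
    exact ((k c 0).add (k b 1)).add (hl 2)
  have hLe : ∀ b c x, eval x (L b c) = c * eval x (l 0) + b * eval x (l 1) + eval x (l 2) := by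
    intro b c x; simp [L]
  have hQe : ∀ x, eval x Q = eval x (l 1) * eval x (l 1) - eval x (l 0) * eval x (l 2) := by
    intro x; simp [Q]
  have hL0 : ∀ b c, L b c ≠ 0 := by
    intro b c h
    have := hLe b c (s ![0, 0, 1])
    rw [h, hs, hs, hs] at this
    simp at this
  have hQ0 : Q ≠ 0 := by
    intro h
    have := hQe (s ![0, 1, 0])
    rw [h, hs, hs, hs] at this
    simp at this
  have hQ : Q.IsHomogeneous 2 := ((hl 1).mul (hl 1)).sub ((hl 0).mul (hl 2))
  refine ⟨Q * (L b c * L b' c'), hQ.mul ((hL b c).mul (hL b' c')),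
    mul_ne_zero hQ0 (mul_ne_zero (hL0 _ _) (hL0 _ _)), ?_, ?_⟩
  · have : aeval v Q = 0 := by
      simp only [Q, map_sub, map_mul, hlv]
      simp
      ring
    rw [map_mul, this, zero_mul]
  rw [zs_mul, zs_mul]
  set B := zs (L b c)
  set B' := zs (L b' c')
  have cB : B.card = (m + 1) ^ 2 := by rw [zs_lin (hL b c) (hL0 b c), hm]
  have cB' : B'.card = (m + 1) ^ 2 := by rw [zs_lin (hL b' c') (hL0 b' c'), hm]
  have cI : (B ∩ B').card ≤ m + 1 := by
    rw [← hm, ← Finset.card_univ]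
    have hmem : ∀ x ∈ (B ∩ B' : Finset (Fin 3 → F)),
        c * eval x (l 0) + b * eval x (l 1) + eval x (l 2) = 0 ∧
        c' * eval x (l 0) + b' * eval x (l 1) + eval x (l 2) = 0 := by
      intro x hx
      rw [Finset.mem_inter, mem_zs, mem_zs, hLe, hLe] at hx
      exact hx
    rcases hne with hb | hc
    · refine Finset.card_le_card_of_injOn (fun x => eval x (l 0)) (fun _ _ => Finset.mem_univ _) ?_
      intro x hx y hy hxy
      obtain ⟨x1, x2⟩ := hmem x hx
      obtain ⟨y1, y2⟩ := hmem y hy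
      have e0 : eval x (l 0) = eval y (l 0) := hxy
      have e1 : eval x (l 1) = eval y (l 1) := by
        apply mul_left_cancel₀ (sub_ne_zero.2 hb)
        linear_combination x1 - x2 - y1 + y2 - (c - c') * e0
      refine hext x y e0 e1 ?_
      linear_combination x1 - y1 - c * e0 - b * e1
    · refine Finset.card_le_card_of_injOn (fun x => eval x (l 1)) (fun _ _ => Finset.mem_univ _) ?_
      intro x hx y hy hxy
      obtain ⟨x1, x2⟩ := hmem x hx
      obtain ⟨y1, y2⟩ := hmem y hy
      have e1 : eval x (l 1) = eval y (l 1) := hxy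
      have e0 : eval x (l 0) = eval y (l 0) := by
        apply mul_left_cancel₀ (sub_ne_zero.2 hc)
        linear_combination x1 - x2 - y1 + y2 - (b - b') * e1
      refine hext x y e0 e1 ?_
      linear_combination x1 - y1 - c * e0 - b * e1
  have cU := Finset.card_union_add_card_inter B B'
  let g : F × F → (Fin 3 → F) := fun p =>
    if p.1 = 0 then ![0, 0, p.2] else ![p.1, p.1 * p.2, p.1 * p.2 ^ 2]
  have hg : Function.Injective g := by
    rintro ⟨a, t⟩ ⟨a', t'⟩ h
    by_cases ha : a = 0 <;> by_cases ha' : a' = 0 <;>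
      simp [g, ha, ha'] at h
    · rw [ha, ha', h]
    · exact absurd h.1.symm ha'
    · obtain ⟨e1, e2, -⟩ := h
      rw [e1] at e2
      rw [e1, mul_left_cancel₀ ha' e2]
  let A : Finset (Fin 3 → F) := Finset.univ.image (s ∘ g)
  have cA : A.card = (m + 1) ^ 2 := by
    rw [Finset.card_image_of_injective _ (hsi.comp hg), Finset.card_univ, Fintype.card_prod, hm, sq]
  have hAQ : A ⊆ zs Q := by
    intro x hx
    obtain ⟨⟨a, t⟩, -, rfl⟩ := Finset.mem_image.1 hx
    rw [mem_zs, hQe, Function.comp, hs, hs, hs]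
    by_cases ha : a = 0
    · simp [g, ha]
    · simp [g, ha]; ring
  have hAL : ∀ b c : F, (∀ t : F, c + b * t + t ^ 2 ≠ 0) → ∀ x ∈ A, x ∈ zs (L b c) → x = s 0 := by
    intro b c h x hx hx'
    obtain ⟨⟨a, t⟩, -, rfl⟩ := Finset.mem_image.1 hx
    rw [mem_zs, hLe, Function.comp, hs, hs, hs] at hx'
    by_cases ha : a = 0
    · simp [g, ha] at hx'
      have : (![0, 0, 0] : Fin 3 → F) = 0 := by ext i; fin_cases i <;> rfl
      simp [g, ha, hx', this]
    · exfalso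
      simp [g, ha] at hx'
      have : a * (c + b * t + t ^ 2) = 0 := by linear_combination hx'
      exact (mul_ne_zero ha (h t)) this
  have cAI : (A ∩ (B ∪ B')).card ≤ 1 := by
    rw [Finset.card_le_one_iff_subset_singleton]
    refine ⟨s 0, ?_⟩
    intro x hx
    rw [Finset.mem_inter, Finset.mem_union] at hx
    rw [Finset.mem_singleton]
    rcases hx with ⟨hxA, hx | hx⟩
    · exact hAL b c h1 x hxA hx
    · exact hAL b' c' h2 x hxA hx
  have cU2 := Finset.card_union_add_card_inter A (B ∪ B')
  have cfin : (A ∪ (B ∪ B')).card ≤ (zs Q ∪ (B ∪ B')).card :=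
    Finset.card_le_card (Finset.union_subset_union_left hAQ)
  nlinarith

end existence




/-- Parameters of the code `C_L(Z, L_4)` for `q ≥ 4`: evaluating the quartics through a
degree-3 closed point (not on any rational line) at the `q² + q + 1` points of `P²(F_q)`
yields a code of length `q² + q + 1`, dimension `12` (the space of such quartics has
dimension `12` and the evaluation map is injective), and minimum distance exactly
`q² - 2q - 1`. -/
theorem stmt_15 (q : ℕ) (hq : IsPrimePow q) (hq4 : 4 ≤ q)
    (F E : Type) [Field F] [Fintype F] [Field E] [Fintype E] [Algebra F E]
    (hF : Fintype.card F = q) (hE : Fintype.card E = q ^ 3)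
    -- `v` represents a degree-3 closed point of `P²`: its three Frobenius conjugates are
    -- pairwise distinct and non-collinear (equivalently, linearly independent).
    (v : Fin 3 → E)
    (hv : LinearIndependent E ![v, fun i => v i ^ q, fun i => v i ^ q ^ 2]) :
    Nat.card (Projectivization F (Fin 3 → F)) = q ^ 2 + q + 1 ∧
    Module.finrank F
      ↥(homogeneousSubmodule (Fin 3) F 4 ⊓
          LinearMap.ker (MvPolynomial.aeval (R := F) v).toLinearMap) = 12 ∧
    (∀ f ∈ homogeneousSubmodule (Fin 3) F 4 ⊓
        LinearMap.ker (MvPolynomial.aeval (R := F) v).toLinearMap,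
      (∀ x : Projectivization F (Fin 3 → F), MvPolynomial.eval x.rep f = 0) → f = 0) ∧
    (∀ f ∈ homogeneousSubmodule (Fin 3) F 4 ⊓
        LinearMap.ker (MvPolynomial.aeval (R := F) v).toLinearMap, f ≠ 0 →
      q ^ 2 - 2 * q - 1 ≤
        {x : Projectivization F (Fin 3 → F) | MvPolynomial.eval x.rep f ≠ 0}.ncard) ∧
    (∃ f ∈ homogeneousSubmodule (Fin 3) F 4 ⊓
        LinearMap.ker (MvPolynomial.aeval (R := F) v).toLinearMap, f ≠ 0 ∧
      {x : Projectivization F (Fin 3 → F) | MvPolynomial.eval x.rep f ≠ 0}.ncard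
        = q ^ 2 - 2 * q - 1) := by
  obtain ⟨m, rfl⟩ : ∃ m, q = m + 1 := ⟨q - 1, by omega⟩
  have hm3 : 3 ≤ m := by omega
  have h3 : Module.finrank F E = 3 := by
    have := Module.card_eq_pow_finrank (K := F) (V := E)
    rw [hE, hF] at this
    exact (Nat.pow_right_injective (by omega) this).symm
  have hFD : FiniteDimensional F E := Module.finite_of_finrank_pos (by omega)
  have hvF := indepF v _ hF hv
  have harith : (m + 1) ^ 2 - 2 * (m + 1) - 1 = m ^ 2 - 2 := by
    have : (m + 1) ^ 2 = m ^ 2 + 2 * m + 1 := by ring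
    omega
  have hm9 : 9 ≤ m ^ 2 := by nlinarith
  obtain ⟨r, hr⟩ : ∃ r, m ^ 2 = r + 2 := ⟨m ^ 2 - 2, by omega⟩
  have hr' : m ^ 2 - 2 = r := by omega
  rw [harith, hr']
  have hmin : ∀ f ∈ homogeneousSubmodule (Fin 3) F 4 ⊓
        LinearMap.ker (MvPolynomial.aeval (R := F) v).toLinearMap, f ≠ 0 →
      r ≤ {x : Projectivization F (Fin 3 → F) | MvPolynomial.eval x.rep f ≠ 0}.ncard := by
    intro f hf hf0
    obtain ⟨hf4, hfk⟩ := Submodule.mem_inf.1 hf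
    have hb := main_bound hvF hF (by omega) hf4 hf0 (LinearMap.mem_ker.1 hfk)
    have he := zs_eq hF hf4 (by norm_num)
    refine le_of_mul_le_mul_left ?_ (show 0 < m by omega)
    nlinarith
  refine ⟨?_, finrank12 h3 v hvF, ?_, hmin, ?_⟩
  · rw [Projectivization.card_of_finrank F (Fin 3 → F) (n := 3) (by simp), Nat.card_eq_fintype_card,
      hF]
    simp [Finset.sum_range_succ]
    ring
  · intro f hf hz
    by_contra hf0
    have := hmin f hf hf0
    have h0 : {x : Projectivization F (Fin 3 → F) | MvPolynomial.eval x.rep f ≠ 0} = ∅ := by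
      ext x
      simp [hz x]
    rw [h0, Set.ncard_empty] at this
    omega
  · obtain ⟨f, hf4, hf0, hfv, hc⟩ := exists_extremal h3 hvF hF hm3
    have hmem : f ∈ homogeneousSubmodule (Fin 3) F 4 ⊓
        LinearMap.ker (MvPolynomial.aeval (R := F) v).toLinearMap :=
      Submodule.mem_inf.2 ⟨hf4, LinearMap.mem_ker.2 hfv⟩
    refine ⟨f, hmem, hf0, le_antisymm ?_ (hmin f hmem hf0)⟩
    have he := zs_eq hF hf4 (by norm_num)
    refine le_of_mul_le_mul_left ?_ (show 0 < m by omega)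
    nlinarith
end
end

section
/- Let q be a prime power with q ≥ 5 and let P be a closed point of degree 3 of P² over F_q not contained in any F_q-rational line, given by a point p ∈ P²(F_{q³}) whose Frobenius orbit {p, φ(p), φ²(p)} has exactly 3 elements, these three points being non-collinear. Then there exists a nonzero homogeneous polynomial f ∈ F_q[x,y,z] of degree 5 vanishing at p such that the number of points [a:b:c] ∈ P²(F_q) with f(a,b,c) = 0 is exactly 4q + 2. -/
open MvPolynomial

noncomputable section

theorem aux_indep (q : ℕ) (F E : Type) [Field F] [Fintype F] [Field E] [Fintype E] [Algebra F E]
    (hF : Fintype.card F = q) (v : Fin 3 → E)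
    (hv : LinearIndependent E ![v, fun i => v i ^ q, fun i => v i ^ q ^ 2]) :
    LinearIndependent F v := by
  rw [Fintype.linearIndependent_iff]
  intro c hc
  let M : Matrix (Fin 3) (Fin 3) E := ![v, fun i => v i ^ q, fun i => v i ^ q ^ 2]
  have hM : IsUnit M := Matrix.linearIndependent_rows_iff_isUnit.mp hv
  have hinj := Matrix.mulVec_injective_iff_isUnit.mpr hM
  have hq0 : q ≠ 0 := by rw [← hF]; exact Fintype.card_ne_zero
  have h1 : ∑ i, c i • v i ^ q = 0 := by
    have := congrArg (FiniteField.frobeniusAlgHom F E) hc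
    simpa [map_sum, hF, hq0] using this
  have h2 : ∑ i, c i • v i ^ q ^ 2 = 0 := by
    have := congrArg (FiniteField.frobeniusAlgHom F E) h1
    simpa [map_sum, hF, hq0, ← pow_mul, pow_two] using this
  have : M.mulVec (fun i => algebraMap F E (c i)) = M.mulVec 0 := by
    rw [Matrix.mulVec_zero]
    ext k
    simp only [Algebra.smul_def] at hc h1 h2
    fin_cases k
    · simpa [M, Matrix.mulVec, dotProduct, mul_comm] using hc
    · simpa [M, Matrix.mulVec, dotProduct, mul_comm] using h1
    · simpa [M, Matrix.mulVec, dotProduct, mul_comm] using h2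
  have h := hinj this
  intro i
  have := congrFun h i
  simpa using this

theorem aux_m (F : Type) [Field F] [Fintype F] :
    ∃ m : F, m ≠ 0 ∧ ∀ r s : F, r ^ 2 = m → s ^ 2 = m → r = s := by
  by_cases h : ringChar F = 2
  · refine ⟨1, one_ne_zero, ?_⟩
    have : CharP F 2 := ringChar.of_eq h
    have h2 : (2 : F) = 0 := by exact_mod_cast CharP.cast_eq_zero F 2
    intro r s hr hs
    have : (r - s) ^ 2 = 0 := by linear_combination hr + hs + (1 - r * s - s ^ 2 + s^2) * h2 
    exact sub_eq_zero.mp (pow_eq_zero_iff (two_ne_zero)|>.mp this)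
  · obtain ⟨m, hm⟩ := FiniteField.exists_nonsquare h
    refine ⟨m, ?_, ?_⟩
    · rintro rfl
      exact hm ⟨0, by simp⟩
    · intro r s hr
      exact absurd ⟨r, by rw [← hr, sq]⟩ hm

theorem aux_b (F : Type) [Field F] [Fintype F] (h5 : 5 ≤ Fintype.card F) :
    ∃ (m : F) (b : Fin 3 → F), m ≠ 0 ∧ Function.Injective b ∧
      ∀ i r, r ^ 2 + b i * r + m ≠ 0 := by
  classical
  obtain ⟨m, hm, huniq⟩ := aux_m F
  refine ⟨m, ?_⟩
  let g : F → F := fun r => -(r + m / r)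
  let U : Finset F := Finset.univ.filter (fun r => r ≠ 0)
  let S0 := U.filter (fun r => ¬ r ^ 2 = m)
  let S1 := U.filter (fun r => r ^ 2 = m)
  have hU : U.card + 1 = Fintype.card F := by
    have : U = Finset.univ.erase 0 := by ext; simp [U]
    rw [this, Finset.card_erase_of_mem (Finset.mem_univ _), Finset.card_univ]; omega
  have hS : S1.card + S0.card = U.card := Finset.card_filter_add_card_filter_not _
  have hS1 : S1.card ≤ 1 := by
    rw [Finset.card_le_one]
    intro a ha b hb
    simp only [S1, Finset.mem_filter] at ha hb
    exact huniq _ _ ha.2 hb.2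
  have hS0 : (S0.image g).card * 2 ≤ S0.card := by
    rw [mul_comm]
    apply Finset.mul_card_image_le_card
    intro c hc
    obtain ⟨r, hr, rfl⟩ := Finset.mem_image.mp hc
    simp only [S0, U, Finset.mem_filter, Finset.mem_univ, true_and] at hr
    obtain ⟨hr0, hrm⟩ := hr
    have hne : r ≠ m / r := by
      intro h
      rw [eq_div_iff hr0] at h
      exact hrm (by rw [sq, h])
    rw [← Finset.card_pair hne]
    apply Finset.card_le_card
    intro x hx
    simp only [Finset.mem_insert, Finset.mem_singleton] at hx
    simp only [S0, U, Finset.mem_filter, Finset.mem_univ, true_and]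
    rcases hx with rfl | rfl
    · exact ⟨⟨hr0, hrm⟩, rfl⟩
    · refine ⟨⟨div_ne_zero hm hr0, ?_⟩, ?_⟩
      · intro h
        apply hrm
        field_simp at h
        exact h.symm
      · simp only [g]
        field_simp
        ring
  let B := Finset.univ \ U.image g
  have hB : 3 ≤ B.card := by
    have h1 : (U.image g).card ≤ (S0.image g).card + (S1.image g).card := by
      have : U.image g = S0.image g ∪ S1.image g := by
        rw [← Finset.image_union]; congr 1; ext; simp [S0, S1]; tauto
      rw [this]; exact Finset.card_union_le _ _
    have h2 : (S1.image g).card ≤ S1.card := Finset.card_image_le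
    have h3 : B.card = Fintype.card F - (U.image g).card := by
      rw [Finset.card_sdiff_of_subset (Finset.subset_univ _), Finset.card_univ]
    omega
  obtain ⟨T, hT, hT3⟩ := Finset.exists_subset_card_eq hB
  let e := T.equivFinOfCardEq hT3
  refine ⟨fun i => (e.symm i : F), hm, ?_, ?_⟩
  · intro i j h
    exact e.symm.injective (Subtype.ext h)
  · intro i r hr
    have hb := hT (e.symm i).2
    simp only [B, Finset.mem_sdiff, Finset.mem_univ, true_and] at hb
    apply hb
    have hr0 : r ≠ 0 := by
      rintro rfl
      apply hm; simpa using hr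
    rw [Finset.mem_image]
    refine ⟨r, by simp [U, hr0], ?_⟩
    simp only [g]
    field_simp
    linear_combination -hr

theorem aux_A (F E : Type) [Field F] [Fintype F] [Field E] [Fintype E] [Algebra F E]
    (h3 : Module.finrank F E = 3) (v : Fin 3 → E) (hv : LinearIndependent F v) :
    ∃ (M : Matrix (Fin 3) (Fin 3) F) (θ : E), IsUnit M ∧
      ∀ k, ∑ i, algebraMap F E (M k i) * v i = θ ^ (k : ℕ) := by
  obtain ⟨θ, hθ⟩ := Field.exists_primitive_element F E
  have hint : IsIntegral F θ := IsIntegral.of_finite F θ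
  have hdeg : (minpoly F θ).natDegree = 3 := by
    rw [← h3]; exact (Field.primitive_element_iff_minpoly_natDegree_eq F θ).mp hθ
  have hli : LinearIndependent F (fun k : Fin 3 => θ ^ (k : ℕ)) := by
    have := linearIndependent_pow (K := F) θ
    rw [hdeg] at this
    exact this
  let Bv := basisOfLinearIndependentOfCardEqFinrank hv (by simp [h3])
  have hBv : ∀ i, Bv i = v i := by intro i; simp [Bv]
  let M : Matrix (Fin 3) (Fin 3) F := fun k i => Bv.repr (θ ^ (k : ℕ)) i
  refine ⟨M, θ, ?_, ?_⟩
  · rw [← Matrix.linearIndependent_rows_iff_isUnit]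
    have := hli.map' (Bv.equivFun : E →ₗ[F] (Fin 3 → F)) (LinearEquiv.ker _)
    exact this
  · intro k
    have := Bv.sum_repr (θ ^ (k : ℕ))
    simpa [hBv, Algebra.smul_def, M] using this

/-- normalized representatives of the zeros -/
def gpt {F : Type} [Field F] (m : F) (b : Fin 3 → F) : Unit ⊕ Option F ⊕ (Fin 3 × F) → (Fin 3 → F)
  | .inl _ => ![1, 0, -m]
  | .inr (.inl none) => ![0, 0, 1]
  | .inr (.inl (some t)) => ![1, t, t ^ 2]
  | .inr (.inr (i, y)) => ![y, 1, - b i - m * y]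

def gval {F : Type} [Field F] (m : F) (b : Fin 3 → F) (w : Fin 3 → F) : F :=
  (w 0 * w 2 - w 1 ^ 2) * ∏ i, (w 2 + b i * w 1 + m * w 0)

theorem gpt_ne {F : Type} [Field F] (m : F) (b : Fin 3 → F) (t) : gpt m b t ≠ 0 := by
  rcases t with _ | (_ | t) | ⟨i, y⟩ <;> intro h <;>
  · have h0 := congrFun h 0
    have h1 := congrFun h 1
    have h2 := congrFun h 2
    simp [gpt] at h0 h1 h2

theorem gval_gpt {F : Type} [Field F] (m : F) (b : Fin 3 → F) (t) (a : F) :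
    gval m b (a • gpt m b t) = 0 := by
  rcases t with _ | (_ | t) | ⟨i, y⟩
  · simp [gval, gpt]; right; ring
  · simp [gval, gpt]
  · simp [gval, gpt]; left; ring
  · simp only [gval]
    apply mul_eq_zero_of_right
    apply Finset.prod_eq_zero (Finset.mem_univ i)
    simp [gpt]; ring

theorem gval_exists {F : Type} [Field F] (m : F) (b : Fin 3 → F) (w : Fin 3 → F)
    (h : gval m b w = 0) : ∃ t, ∃ a : F, w = a • gpt m b t := by
  simp only [gval, mul_eq_zero, Finset.prod_eq_zero_iff, Finset.mem_univ, true_and] at h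
  rcases h with h | ⟨i, h⟩
  · by_cases h0 : w 0 = 0
    · have h1 : w 1 = 0 := by simpa [h0] using h
      refine ⟨.inr (.inl none), w 2, ?_⟩
      ext k; fin_cases k <;> simp [gpt, h0, h1]
    · refine ⟨.inr (.inl (some (w 1 / w 0))), w 0, ?_⟩
      ext k; fin_cases k
      · simp [gpt]
      · simp [gpt]; field_simp
      · simp [gpt]; field_simp; linear_combination h
  · by_cases h1 : w 1 = 0
    · refine ⟨.inl (), w 0, ?_⟩
      ext k; fin_cases k
      · simp [gpt]
      · simp [gpt, h1]
      · simp [gpt]; rw [h1] at h; linear_combination h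
    · refine ⟨.inr (.inr (i, w 0 / w 1)), w 1, ?_⟩
      ext k; fin_cases k
      · simp [gpt]; field_simp
      · simp [gpt]
      · simp [gpt]; field_simp; linear_combination h

theorem gpt_inj {F : Type} [Field F] (m : F) (b : Fin 3 → F) (hm : m ≠ 0)
    (hb : Function.Injective b) (hirr : ∀ i r, r ^ 2 + b i * r + m ≠ 0) (s t) (a : F)
    (h : a • gpt m b s = gpt m b t) : s = t := by
  have h0 := congrFun h 0
  have h1 := congrFun h 1
  have h2 := congrFun h 2
  rcases s with _ | (_ | s) | ⟨i, y⟩ <;> rcases t with _ | (_ | t) | ⟨j, z⟩ <;>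
    simp [gpt] at h0 h1 h2 ⊢
  · grind
  · grind
  · grind
  · grind
  · grind
  · subst h0
    exact hirr j s (by linear_combination s * h2 - (s ^ 2 + m) * h1)
  · grind
  · grind
  · subst h1
    exact hirr i a (by linear_combination -h2 - m * h0)
  · subst h1
    refine ⟨hb ?_, by simpa using h0⟩
    linear_combination -h2 - m * h0

theorem stmt_17 (q : ℕ) (hq : IsPrimePow q) (hq5 : 5 ≤ q)
    (F E : Type) [Field F] [Fintype F] [Field E] [Fintype E] [Algebra F E]
    (hF : Fintype.card F = q) (hE : Fintype.card E = q ^ 3)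
    -- `v` represents a degree-3 closed point of `P²`: its three Frobenius conjugates are
    -- pairwise distinct and non-collinear (equivalently, linearly independent).
    (v : Fin 3 → E)
    (hv : LinearIndependent E ![v, fun i => v i ^ q, fun i => v i ^ q ^ 2]) :
    ∃ f : MvPolynomial (Fin 3) F, f ≠ 0 ∧ f.IsHomogeneous 5 ∧
      MvPolynomial.aeval v f = 0 ∧
      {x : Projectivization F (Fin 3 → F) | MvPolynomial.eval x.rep f = 0}.ncard = 4 * q + 2 := by
  have h3 : Module.finrank F E = 3 := by
    have := Module.card_eq_pow_finrank (K := F) (V := E)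
    rw [hE, hF] at this
    exact (Nat.pow_right_injective (by omega : 2 ≤ q) this).symm
  obtain ⟨M, θ, hM, hθ⟩ := aux_A F E h3 v (aux_indep q F E hF v hv)
  obtain ⟨m, b, hm, hb, hirr⟩ := aux_b F (by omega)
  have hinj : Function.Injective M.mulVec := Matrix.mulVec_injective_iff_isUnit.mpr hM
  have hsurj : Function.Surjective M.mulVec := Matrix.mulVec_surjective_iff_isUnit.mpr hM
  let L : Fin 3 → MvPolynomial (Fin 3) F := fun k => ∑ i, C (M k i) * X i
  have hLe : ∀ x k, eval x (L k) = M.mulVec x k := by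
    intro x k; simp [L, Matrix.mulVec, dotProduct]
  have hLa : ∀ k, aeval v (L k) = θ ^ (k : ℕ) := by
    intro k; rw [← hθ k]; simp [L]
  have hLh : ∀ k, (L k).IsHomogeneous 1 := by
    intro k
    apply IsHomogeneous.sum
    intro i _
    exact isHomogeneous_C_mul_X _ _
  let Q := L 0 * L 2 - L 1 ^ 2
  let N : Fin 3 → MvPolynomial (Fin 3) F := fun i => L 2 + C (b i) * L 1 + C m * L 0
  have hQh : Q.IsHomogeneous 2 := ((hLh 0).mul (hLh 2)).sub ((hLh 1).pow 2)
  have hNh : ∀ i, (N i).IsHomogeneous 1 := fun i =>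
    ((hLh 2).add ((hLh 1).C_mul _)).add ((hLh 0).C_mul _)
  have hev : ∀ x, eval x (Q * ∏ i, N i) = gval m b (M.mulVec x) := by
    intro x
    simp [Q, N, gval, hLe, map_prod]
  refine ⟨Q * ∏ i, N i, ?_, ?_, ?_, ?_⟩
  · apply mul_ne_zero
    · obtain ⟨x, hx⟩ := hsurj ![0, 1, 0]
      intro h
      have := congrArg (eval x) h
      simp [Q, hLe, hx] at this
    · rw [Finset.prod_ne_zero_iff]
      intro i _ h
      obtain ⟨x, hx⟩ := hsurj ![0, 0, 1]
      have := congrArg (eval x) h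
      simp [N, hLe, hx] at this
  · have := hQh.mul (IsHomogeneous.prod Finset.univ N (fun _ => 1) (fun i _ => hNh i))
    simpa using this
  · simp only [map_mul, Q, map_sub, map_pow, hLa]
    simp
  · choose w hw using fun t => hsurj (gpt m b t)
    have hw0 : ∀ t, w t ≠ 0 := by
      intro t h
      apply gpt_ne m b t
      rw [← hw t, h, Matrix.mulVec_zero]
    let G := fun t => Projectivization.mk F (w t) (hw0 t)
    have hG : Function.Injective G := by
      intro s t h
      obtain ⟨a, ha⟩ := (Projectivization.mk_eq_mk_iff' F _ _ _ _).mp h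
      symm
      apply gpt_inj m b hm hb hirr t s a
      rw [← hw, ← hw, ← ha, Matrix.mulVec_smul]
    have hset : {x : Projectivization F (Fin 3 → F) | eval x.rep (Q * ∏ i, N i) = 0}
        = Set.range G := by
      ext x
      rw [Set.mem_ofPred_eq, hev]
      constructor
      · intro h
        obtain ⟨t, a, h⟩ := gval_exists m b _ h
        refine ⟨t, ?_⟩
        rw [← x.mk_rep]
        symm
        rw [Projectivization.mk_eq_mk_iff']
        refine ⟨a, hinj ?_⟩
        rw [Matrix.mulVec_smul, hw, h]
      · rintro ⟨t, rfl⟩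
        obtain ⟨a, ha⟩ := (Projectivization.mk_eq_mk_iff' F _ _ (G t).rep_nonzero (hw0 t)).mp
          (G t).mk_rep
        rw [← ha, Matrix.mulVec_smul, hw]
        exact gval_gpt m b t a
    rw [hset, ← Nat.card_coe_set_eq, Nat.card_range_of_injective hG]
    simp [hF]
    ring
end
end
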